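/- The following 20-point positive cubature rule of index 4 with rational data holds on the 4-dimensional simplex: for every homogeneous polynomial f of degree 4 in 5 variables, 4! · ∫_{T^4} f(x_1,x_2,x_3,x_4, 1−x_1−x_2−x_3−x_4) dx = (2/21)·avg f over the 10 distinct coordinate permutations of (1/2, 1/2, 0, 0, 0) + (32/63)·avg f over the 5 distinct coordinate permutations of (1/4, 1/4, 1/4, 1/4, 0) + (25/63)·avg f over the 5 distinct coordinate permutations of (3/5, 1/10, 1/10, 1/10, 1/10), where avg denotes the arithmetic mean of the values of f over the listed points. -/

import Mathlib

open MeasureTheory Finset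

/-- The standard simplex `T^d` in `ℝ^d`. -/
def Td (d : ℕ) : Set (Fin d → ℝ) :=
  {x | (∀ i, 0 ≤ x i) ∧ ∑ i, x i ≤ 1}

/-- The weight function `W_γ(x) = (x_1 ⋯ x_d (1 - |x|₁))^γ` on `T^d`. -/
noncomputable def Wg (d : ℕ) (γ : ℝ) (x : Fin d → ℝ) : ℝ :=
  ((∏ i, x i) * (1 - ∑ i, x i)) ^ γ

/-- The normalization constant `w_γ = Γ((d+1)(γ+1)) / Γ(γ+1)^(d+1)`. -/
noncomputable def wg (d : ℕ) (γ : ℝ) : ℝ :=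
  Real.Gamma ((d + 1) * (γ + 1)) / (Real.Gamma (γ + 1)) ^ (d + 1)

/-- Homogeneous coordinates: `x ↦ (x, 1 - |x|₁) ∈ 𝒯^{d+1}`. -/
noncomputable def lift (d : ℕ) (x : Fin d → ℝ) : Fin (d + 1) → ℝ :=
  Fin.snoc x (1 - ∑ i, x i)

/-- The average of `f` over the set of distinct coordinate permutations of `y`. -/
noncomputable def orbitAvg (d : ℕ) (y : Fin (d + 1) → ℝ) (f : (Fin (d + 1) → ℝ) → ℝ) : ℝ :=
  ((Finset.image (fun σ : Equiv.Perm (Fin (d + 1)) => y ∘ σ) Finset.univ).card : ℝ)⁻¹ *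
    ∑ z ∈ Finset.image (fun σ : Equiv.Perm (Fin (d + 1)) => y ∘ σ) Finset.univ, f z

/-!
A homogeneous polynomial is a linear combination of monomials `x ^ m` with `|m| = 4`, so it suffices
to compare moments. Dirichlet's formula evaluates the moments of the simplex. A node with value `c`
on `k` coordinates and `0` elsewhere sees `x ^ m` as the indicator that those `k` coordinates
contain the support of `m`, so its orbit average is `c ^ |m|` times the probability that a uniformly
random `k`-subset contains a given set. Dividing the node `(3/5, 1/10, …, 1/10)` by `1/10` turns its
orbit average into a power sum `∑ j, 6 ^ m j`. All these moments are symmetric in `m`, so that only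
the five partitions of `4` have to be checked.
-/

open scoped BigOperators Pointwise

/-- The simplex of size `s`: the simplex `T^d` is the case `s = 1`, and its slices perpendicular to
a coordinate axis are simplices of smaller size. -/
def scaledSimplex (d : ℕ) (s : ℝ) : Set (Fin d → ℝ) :=
  {x | (∀ i, 0 ≤ x i) ∧ ∑ i, x i ≤ s}

lemma isClosed_scaledSimplex (d : ℕ) (s : ℝ) : IsClosed (scaledSimplex d s) := by
  have h : scaledSimplex d s = (⋂ i, {x | 0 ≤ x i}) ∩ {x | ∑ i, x i ≤ s} := by
    ext x; simp [scaledSimplex]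
  rw [h]
  exact (isClosed_iInter fun i => isClosed_le (by fun_prop) (by fun_prop)).inter
    (isClosed_le (by fun_prop) (by fun_prop))

lemma isCompact_scaledSimplex (d : ℕ) (s : ℝ) : IsCompact (scaledSimplex d s) := by
  refine (isCompact_Icc (a := fun _ : Fin d => (0 : ℝ)) (b := fun _ => s)).of_isClosed_subset
    (isClosed_scaledSimplex d s) fun x hx => ⟨hx.1, fun i => ?_⟩
  exact (single_le_sum (f := x) (fun j _ => hx.1 j) (mem_univ i)).trans hx.2

lemma cons_mem_scaledSimplex_iff {d : ℕ} {s t : ℝ} {y : Fin d → ℝ} :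
    (Fin.cons t y : Fin (d + 1) → ℝ) ∈ scaledSimplex (d + 1) s ↔
      t ∈ Set.Icc 0 s ∧ y ∈ scaledSimplex d (s - t) := by
  have hle (hy : ∀ i, 0 ≤ y i) (h : t + ∑ i, y i ≤ s) : t ≤ s := by
    linarith [sum_nonneg fun i (_ : i ∈ univ) => hy i]
  simp only [scaledSimplex, Set.mem_ofPred_eq, Fin.forall_fin_succ, Fin.cons_zero, Fin.cons_succ,
    Fin.sum_univ_succ, Set.mem_Icc, le_sub_iff_add_le']
  tauto

lemma integral_eq_integral_integral_fin_cons {X E : Type*} [MeasureSpace X]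
    [SigmaFinite (volume : Measure X)] [NormedAddCommGroup E] [NormedSpace ℝ E] {d : ℕ}
    {f : (Fin (d + 1) → X) → E} (hf : Integrable f) :
    ∫ x, f x = ∫ t, ∫ y : Fin d → X, f (Fin.cons t y) := by
  have hmp := (volume_preserving_piFinSuccAbove (fun _ : Fin (d + 1) => X) 0).symm
  have hcons (p : X × (Fin d → X)) :
      (MeasurableEquiv.piFinSuccAbove (fun _ : Fin (d + 1) => X) 0).symm p =
        Fin.cons p.1 p.2 := by
    simp [MeasurableEquiv.piFinSuccAbove, Fin.insertNthEquiv]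
  have hf' := (hmp.integrable_comp_emb (MeasurableEquiv.measurableEmbedding _)).2 hf
  rw [← hmp.integral_comp' f]
  rw [Measure.volume_eq_prod] at hf' ⊢
  refine (integral_prod _ hf').trans ?_
  simp only [Function.comp_apply, hcons]

lemma integral_scaledSimplex_succ {E : Type*} [NormedAddCommGroup E] [NormedSpace ℝ E] {d : ℕ}
    {s : ℝ} (hs : 0 ≤ s) {f : (Fin (d + 1) → ℝ) → E}
    (hf : IntegrableOn f (scaledSimplex (d + 1) s)) :
    ∫ x in scaledSimplex (d + 1) s, f x =
      ∫ t in 0..s, ∫ y in scaledSimplex d (s - t), f (Fin.cons t y) := by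
  have hmeas (n : ℕ) (r : ℝ) : MeasurableSet (scaledSimplex n r) :=
    (isClosed_scaledSimplex n r).measurableSet
  have hslice (t : ℝ) : ∫ y, (scaledSimplex (d + 1) s).indicator f (Fin.cons t y) =
      (Set.Icc 0 s).indicator (fun t => ∫ y in scaledSimplex d (s - t), f (Fin.cons t y)) t := by
    classical
    by_cases ht : t ∈ Set.Icc 0 s
    · simp only [Set.indicator_of_mem ht, ← integral_indicator (hmeas d _), Set.indicator_apply,
        cons_mem_scaledSimplex_iff, ht, true_and]
    · simp [cons_mem_scaledSimplex_iff, ht]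
  rw [← integral_indicator (hmeas _ _),
    integral_eq_integral_integral_fin_cons (hf.integrable_indicator (hmeas _ _))]
  simp only [hslice]
  rw [integral_indicator measurableSet_Icc, integral_Icc_eq_integral_Ioc,
    ← intervalIntegral.integral_of_le hs]

lemma intervalIntegral_pow_mul_sub_pow {s : ℝ} (hs : 0 ≤ s) (a b : ℕ) :
    ∫ t in (0 : ℝ)..s, t ^ a * (s - t) ^ b =
      (a.factorial * b.factorial : ℝ) / (a + b + 1).factorial * s ^ (a + b + 1) := by
  rcases hs.eq_or_lt with rfl | hs
  · simp
  have h := Complex.betaIntegral_scaled (a + 1) (b + 1) hs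
  have hre (n : ℕ) : 0 < (n + 1 : ℂ).re := by
    rw [← Nat.cast_succ, Complex.natCast_re]
    positivity
  rw [Complex.betaIntegral_eq_Gamma_mul_div _ _ (hre a) (hre b),
    show (a + 1 + (b + 1) : ℂ) = (a + b + 1 : ℕ) + 1 by push_cast; ring] at h
  simp only [Complex.Gamma_nat_eq_factorial, add_sub_cancel_right, Complex.cpow_natCast] at h
  rw [mul_comm]
  apply Complex.ofReal_injective
  rw [← intervalIntegral.integral_ofReal]
  push_cast at h ⊢
  exact h

lemma integral_scaledSimplex_prod_pow (d : ℕ) {s : ℝ} (hs : 0 ≤ s) (a : Fin d → ℕ) (b : ℕ) :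
    ∫ x in scaledSimplex d s, (∏ i, x i ^ a i) * (s - ∑ i, x i) ^ b =
      ((∏ i, (a i).factorial : ℝ) * b.factorial) / (d + ∑ i, a i + b).factorial *
        s ^ (d + ∑ i, a i + b) := by
  induction d generalizing s with
  | zero =>
    have huniv : scaledSimplex 0 s = Set.univ := by ext; simp [scaledSimplex, hs]
    have hb : (b.factorial : ℝ) ≠ 0 := by positivity
    simp [huniv, hb, Measure.real, volume_pi]
  | succ d ih =>
    set n := d + ∑ i : Fin d, a i.succ + b with hn
    set c := ((∏ i : Fin d, (a i.succ).factorial : ℝ) * b.factorial) / n.factorial with hc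
    have hslice (t : ℝ) (ht : t ∈ Set.uIcc 0 s) :
        ∫ y in scaledSimplex d (s - t),
          (∏ i, (Fin.cons t y : Fin (d + 1) → ℝ) i ^ a i) *
            (s - ∑ i, (Fin.cons t y : Fin (d + 1) → ℝ) i) ^ b =
          c * (t ^ a 0 * (s - t) ^ n) := by
      rw [Set.uIcc_of_le hs] at ht
      simp only [Fin.prod_univ_succ, Fin.sum_univ_succ, Fin.cons_zero, Fin.cons_succ, mul_assoc,
        ← sub_sub]
      rw [integral_const_mul, ih (sub_nonneg.2 ht.2)]
      ring
    have hdeg : a 0 + n + 1 = d + 1 + ∑ i, a i + b := by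
      rw [hn, Fin.sum_univ_succ]; ring
    have hn0 : (n.factorial : ℝ) ≠ 0 := by positivity
    rw [integral_scaledSimplex_succ hs
        (ContinuousOn.integrableOn_compact (isCompact_scaledSimplex _ _) (by fun_prop)),
      intervalIntegral.integral_congr hslice, intervalIntegral.integral_const_mul,
      intervalIntegral_pow_mul_sub_pow hs, hdeg, hc, Fin.prod_univ_succ]
    field_simp

lemma integral_Td_prod_lift_pow (d : ℕ) (m : Fin (d + 1) → ℕ) :
    ∫ x in Td d, ∏ i, lift d x i ^ m i =
      (∏ i, (m i).factorial : ℝ) / (d + ∑ i, m i).factorial := by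
  have h := integral_scaledSimplex_prod_pow d zero_le_one (fun i => m i.castSucc) (m (Fin.last d))
  rw [show scaledSimplex d 1 = Td d from rfl] at h
  simpa [lift, Fin.prod_univ_castSucc, Fin.sum_univ_castSucc, add_assoc] using h

lemma continuous_lift (d : ℕ) : Continuous (lift d) := by
  unfold lift
  fun_prop

lemma integral_Td_eval_lift (d : ℕ) (f : MvPolynomial (Fin (d + 1)) ℝ) :
    ∫ x in Td d, MvPolynomial.eval (lift d x) f =
      ∑ m ∈ f.support, f.coeff m * ∫ x in Td d, ∏ i, lift d x i ^ m i := by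
  simp only [MvPolynomial.eval_eq', ← integral_const_mul]
  refine integral_finsetSum _ fun m _ => ?_
  have hcont := continuous_lift d
  exact ContinuousOn.integrableOn_compact (isCompact_scaledSimplex d 1) (by fun_prop)

lemma orbitAvg_eval (d : ℕ) (y : Fin (d + 1) → ℝ) (f : MvPolynomial (Fin (d + 1)) ℝ) :
    orbitAvg d y (fun z => MvPolynomial.eval z f) =
      ∑ m ∈ f.support, f.coeff m * orbitAvg d y fun z => ∏ i, z i ^ m i := by
  simp only [orbitAvg, MvPolynomial.eval_eq', mul_left_comm (MvPolynomial.coeff _ _), ← mul_sum]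
  rw [sum_comm]
  simp only [mul_sum]

lemma image_perm_smul_finset {α : Type*} [Fintype α] [DecidableEq α] (S : Finset α) :
    univ.image (fun σ : Equiv.Perm α => σ • S) = powersetCard #S univ := by
  ext s
  simp only [mem_image, mem_univ, true_and, mem_powersetCard_univ]
  refine ⟨by rintro ⟨σ, rfl⟩; exact card_smul_finset σ S, fun hs => ?_⟩
  have := Set.powersetCard.isPretransitive (α := α) (n := #S)
  obtain ⟨σ, hσ⟩ := MulAction.exists_smul_eq (Equiv.Perm α)
    (⟨S, rfl⟩ : Set.powersetCard α #S) ⟨s, hs⟩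
  exact ⟨σ, congrArg Subtype.val hσ⟩

lemma image_ite_comp_perm {α β : Type*} [Fintype α] [DecidableEq α] [DecidableEq β] (p : α → Prop)
    [DecidablePred p] (a b : β) :
    univ.image (fun σ : Equiv.Perm α => (fun i => if p i then a else b) ∘ σ) =
      (powersetCard #{i | p i} univ).image fun s i => if i ∈ s then a else b := by
  ext z
  simp only [← image_perm_smul_finset, image_image, mem_image, mem_univ, true_and]
  refine (Equiv.inv (Equiv.Perm α)).exists_congr fun σ => Eq.congr_left ?_
  ext i
  simp [mem_inv_smul_finset_iff]

lemma ite_mem_injective {α β : Type*} [DecidableEq α] {a b : β} (hab : a ≠ b) :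
    Function.Injective fun (s : Finset α) i => if i ∈ s then a else b := by
  intro s t hst
  ext i
  have hi := congrFun hst i
  by_cases hs : i ∈ s <;> by_cases ht : i ∈ t <;> simp_all [hab.symm]

lemma expect_powersetCard_ite_subset {α K : Type*} [DecidableEq α] [Field K] [CharZero K]
    {t T : Finset α} (hT : T ⊆ t) {k : ℕ} (hk : k ≤ #t) :
    𝔼 s ∈ powersetCard k t, (if T ⊆ s then 1 else 0 : K) = k.choose #T / (#t).choose #T := by
  have hk0 : ((#t).choose k : K) ≠ 0 := by exact_mod_cast (Nat.choose_pos hk).ne'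
  have hT0 : ((#t).choose #T : K) ≠ 0 := by exact_mod_cast (Nat.choose_pos (card_le_card hT)).ne'
  rw [expect_eq_sum_div_card, sum_boole, card_powersetCard, div_eq_div_iff hk0 hT0]
  norm_cast
  rcases le_or_gt #T k with hTk | hkT
  · rw [card_filter_powersetCard_subset _ _ _ hT hTk, mul_comm, ← Nat.choose_mul hTk, mul_comm]
  · have hempty : {s ∈ powersetCard k t | T ⊆ s} = ∅ :=
      filter_eq_empty_iff.2 fun s hs hTs =>
        (hkT.trans_le (card_le_card hTs)).ne' (mem_powersetCard.1 hs).2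
    rw [hempty, card_empty, Nat.choose_eq_zero_of_lt hkT, zero_mul, zero_mul]

lemma orbitAvg_eq_expect (d : ℕ) (y : Fin (d + 1) → ℝ) (f : (Fin (d + 1) → ℝ) → ℝ) :
    orbitAvg d y f = 𝔼 z ∈ univ.image fun σ : Equiv.Perm (Fin (d + 1)) => y ∘ σ, f z := by
  rw [orbitAvg, expect_eq_sum_div_card, div_eq_inv_mul]

lemma orbitAvg_ite {d : ℕ} (p : Fin (d + 1) → Prop) [DecidablePred p] (a b : ℝ)
    (f : (Fin (d + 1) → ℝ) → ℝ) :
    orbitAvg d (fun i => if p i then a else b) f =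
      𝔼 s ∈ powersetCard #{i | p i} univ, f fun i => if i ∈ s then a else b := by
  rw [orbitAvg_eq_expect]
  rcases eq_or_ne a b with rfl | hab
  · have hne : (powersetCard #{i | p i} (univ : Finset (Fin (d + 1)))).Nonempty :=
      powersetCard_nonempty.2 (card_filter_le _ _)
    simp [Function.comp_def, image_const, expect_const hne]
  · rw [image_ite_comp_perm, expect_image (ite_mem_injective hab).injOn]

lemma prod_ite_zero_pow {ι R : Type*} [Fintype ι] [DecidableEq ι] [CommSemiring R] (s : Finset ι)
    (c : R) (m : ι → ℕ) :
    ∏ i, (if i ∈ s then c else 0) ^ m i =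
      c ^ (∑ i, m i) * if ({i | m i ≠ 0} : Finset ι) ⊆ s then 1 else 0 := by
  split_ifs with h
  · rw [mul_one, ← prod_pow_eq_pow_sum]
    refine prod_congr rfl fun i _ => ?_
    by_cases hi : m i = 0
    · simp [hi]
    · rw [if_pos (h (by simpa using hi))]
  · obtain ⟨i, hi, his⟩ := not_subset.1 h
    rw [mul_zero]
    refine prod_eq_zero (mem_univ i) ?_
    rw [if_neg his, zero_pow (mem_filter.1 hi).2]

lemma orbitAvg_ite_zero_prod_pow {d : ℕ} (p : Fin (d + 1) → Prop) [DecidablePred p] (c : ℝ)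
    (m : Fin (d + 1) → ℕ) :
    orbitAvg d (fun i => if p i then c else 0) (fun z => ∏ i, z i ^ m i) =
      c ^ (∑ i, m i) *
        ((#{i | p i}).choose #{i | m i ≠ 0} / (d + 1).choose #{i | m i ≠ 0}) := by
  rw [orbitAvg_ite]
  simp only [prod_ite_zero_pow, ← mul_expect]
  rw [expect_powersetCard_ite_subset (subset_univ _) (card_filter_le _ _), card_univ,
    Fintype.card_fin]

lemma prod_ite_eq_mul_pow {ι R : Type*} [Fintype ι] [DecidableEq ι] [CommSemiring R] (j : ι)
    (t b : R) (m : ι → ℕ) :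
    ∏ i, (if i = j then t * b else b) ^ m i = b ^ (∑ i, m i) * t ^ m j := by
  have hsplit (i : ι) : (if i = j then t * b else b) ^ m i =
      b ^ m i * if i = j then t ^ m i else 1 := by
    split_ifs <;> ring
  simp only [hsplit, prod_mul_distrib, prod_pow_eq_pow_sum, prod_ite_eq', mem_univ, if_true]

lemma orbitAvg_ite_eq_mul_prod_pow {d : ℕ} (j : Fin (d + 1)) (t b : ℝ) (m : Fin (d + 1) → ℕ) :
    orbitAvg d (fun i => if i = j then t * b else b) (fun z => ∏ i, z i ^ m i) =
      b ^ (∑ i, m i) * 𝔼 i, t ^ m i := by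
  rw [orbitAvg_ite, filter_eq', if_pos (mem_univ j), card_singleton, powersetCard_one,
    map_eq_image, expect_image ((Function.Embedding.injective _).injOn)]
  simp only [Function.Embedding.coeFn_mk, mem_singleton, prod_ite_eq_mul_pow, mul_expect]

lemma eq_of_monotone_of_sum_eq_four {m : Fin 5 → ℕ} (hmono : Monotone m) (hsum : ∑ i, m i = 4) :
    m = ![0, 0, 0, 0, 4] ∨ m = ![0, 0, 0, 1, 3] ∨ m = ![0, 0, 0, 2, 2] ∨
      m = ![0, 0, 1, 1, 2] ∨ m = ![0, 1, 1, 1, 1] := by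
  have h01 : m 0 ≤ m 1 := hmono (by decide)
  have h12 : m 1 ≤ m 2 := hmono (by decide)
  have h23 : m 2 ≤ m 3 := hmono (by decide)
  have h34 : m 3 ≤ m 4 := hmono (by decide)
  have heta : m = ![m 0, m 1, m 2, m 3, m 4] := by
    ext i; fin_cases i <;> rfl
  rw [Fin.sum_univ_five] at hsum
  rw [heta]
  simp only [Matrix.vecCons_inj, and_true]
  omega

-- The cubature formula for `x ^ m`, multiplied by `126000` to clear denominators.
lemma mul_prod_factorial_eq_of_sum_eq_four {m : Fin 5 → ℕ} (hsum : ∑ i, m i = 4) :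
    75 * ∏ i, ((m i).factorial : ℝ) =
      750 * (Nat.choose 2 #{i | m i ≠ 0} / Nat.choose 5 #{i | m i ≠ 0}) +
      250 * (Nat.choose 4 #{i | m i ≠ 0} / Nat.choose 5 #{i | m i ≠ 0}) + ∑ i, 6 ^ m i := by
  wlog hmono : Monotone m generalizing m
  · have hsort := this (m := m ∘ Tuple.sort m) ((Equiv.sum_comp _ m).trans hsum)
      (Tuple.monotone_sort m)
    have hcard : #{i | (m ∘ Tuple.sort m) i ≠ 0} = #{i | m i ≠ 0} :=
      card_equiv (Tuple.sort m) (by simp)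
    rw [hcard] at hsort
    simpa only [Function.comp_apply, Equiv.sum_comp (Tuple.sort m) fun i => (6 : ℝ) ^ m i,
      Equiv.prod_comp (Tuple.sort m) fun i => ((m i).factorial : ℝ)] using hsort
  · rcases eq_of_monotone_of_sum_eq_four hmono hsum with rfl | rfl | rfl | rfl | rfl <;>
      norm_num [Fin.sum_univ_succ, Fin.prod_univ_succ, card_filter, Nat.factorial, Nat.choose]

lemma cubature_prod_pow {m : Fin 5 → ℕ} (hsum : ∑ i, m i = 4) :
    (Nat.factorial 4 : ℝ) * ∫ x in Td 4, ∏ i, lift 4 x i ^ m i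
      = (2 / 21) * orbitAvg 4 (fun i => if (i : ℕ) < 2 then 1 / 2 else 0)
            (fun z => ∏ i, z i ^ m i)
        + (32 / 63) * orbitAvg 4 (fun i => if (i : ℕ) < 4 then 1 / 4 else 0)
            (fun z => ∏ i, z i ^ m i)
        + (25 / 63) * orbitAvg 4 (fun i => if (i : ℕ) = 0 then 3 / 5 else 1 / 10)
            (fun z => ∏ i, z i ^ m i) := by
  have hnode : (fun i : Fin 5 => if (i : ℕ) = 0 then (3 / 5 : ℝ) else 1 / 10) =
      fun i => if i = 0 then 6 * (1 / 10) else 1 / 10 := by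
    norm_num [Fin.val_eq_zero_iff]
  have hcard2 : #{i : Fin 5 | (i : ℕ) < 2} = 2 := by decide
  have hcard4 : #{i : Fin 5 | (i : ℕ) < 4} = 4 := by decide
  rw [integral_Td_prod_lift_pow, orbitAvg_ite_zero_prod_pow, orbitAvg_ite_zero_prod_pow, hnode,
    orbitAvg_ite_eq_mul_prod_pow, Fintype.expect_eq_sum_div_card, Fintype.card_fin, hsum,
    hcard2, hcard4]
  norm_num [Nat.factorial]
  linear_combination (1 / 126000) * mul_prod_factorial_eq_of_sum_eq_four hsum

/-- A 20-point positive cubature rule of index `4` with rational data on `T^4`. -/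
theorem cubature_T4_index_four_rational :
    ∀ f : MvPolynomial (Fin 5) ℝ, f.IsHomogeneous 4 →
      (Nat.factorial 4 : ℝ) * ∫ x in Td 4, MvPolynomial.eval (lift 4 x) f
        = (2 / 21) * orbitAvg 4 (fun i => if (i : ℕ) < 2 then 1 / 2 else 0)
              (fun z => MvPolynomial.eval z f)
          + (32 / 63) * orbitAvg 4 (fun i => if (i : ℕ) < 4 then 1 / 4 else 0)
              (fun z => MvPolynomial.eval z f)
          + (25 / 63) * orbitAvg 4 (fun i => if (i : ℕ) = 0 then 3 / 5 else 1 / 10)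
              (fun z => MvPolynomial.eval z f) := by
  intro f hf
  have hmoment (m) (hm : m ∈ f.support) :=
    cubature_prod_pow (m := m) <| by
      rw [← Finsupp.degree_eq_sum, Finsupp.degree_eq_weight_one]
      exact hf (MvPolynomial.mem_support_iff.1 hm)
  simp only [integral_Td_eval_lift, orbitAvg_eval, mul_sum, ← sum_add_distrib]
  exact sum_congr rfl fun m hm => by linear_combination f.coeff m * hmoment m hm
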